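/- In oriented percolation, the lace-expansion coefficient π_p^{(N)}(x) = Σ_{b⃗_N} P_p(Ẽ^{(N)}_{b⃗_N}(x)) satisfies, for N ≥ 1, π_p^{(N)}(x) ≤ Σ over sequences u_1,...,u_{N+1}, v_1,...,v_{N+1} with u_{N+1} = v_{N+1} = x of φ_p(u_1) φ_p(u_1; v_1) φ_p(v_1) ∏_{i=1}^N Ξ_p(u_i, v_i; u_{i+1}, v_{i+1}), where Ξ_p(u,v;u',v') = (ξ^∥_p(u,v;u',v') + ξ^×_p(u,v;u',v')) φ_p(u';v') / 2^{δ_{u',v'}}, ξ^∥_p(u,v;u',v') = (q_p*φ_p)(u;u')(q_p*φ_p)(v;v'), and ξ^×_p(u,v;u',v') = (q_p*φ_p)(u;v')(q_p*φ_p)(v;u'). -/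

import Mathlib

/-!
On the lace-expansion event all lines of one of the diagrams on the right-hand side occur on
pairwise disjoint bond sets; the BK inequality then factorises the probability, and a union bound
over the contact vertices `u` followed by summation over the top endpoints of the bonds gives the
claim.

*Geometry.* Almost surely occupied bonds go one step forward in time, so an occupied path is a
function of time, and two paths share a bond only if they agree at two consecutive times. On
`E(b, x; C̃^b(y))` there are bond-disjoint paths to `x`, one starting with `b` and one starting at
`y` (`twoPaths_of_Eevent`). This is a Menger-type statement: starting from the first vertex of a
path from `b` to `x` that lies in `C̃^b(y)`, the absence of pivotal bonds with bottom endpoint in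
`C̃^b(y)` allows the common endpoint of two disjoint paths to be moved forward in time until it
is `x`. Write `v_i` for the bottom endpoint of `b_i` and `u_i` for the last vertex at which the path
ending at `v_{i+1}` and starting at `b̄_{i-1}` meets the two paths ending at `v_i`. Removing the
part of that path before `u_i` makes all pieces disjoint (`exists_diagram`): pieces from different
levels are separated in time, except for consecutive ones, which are disjoint by the choice of
`u_i`. The two terms `ξ^∥` and `ξ^×` correspond to `u_{i+1}` lying on the path from `u_i` or on the
path from `v_i`; when `u_{i+1} = v_{i+1}` one of them suffices, whence the factor `1 / 2`.

*Probability.* The BK inequality is proved for increasing events given by families of finite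
witnesses (`bk_two`, `bk_family`), by duplicating the bonds one at a time in a finite set
(`bk_pairs`) and taking a monotone limit.
-/

open MeasureTheory
open scoped ENNReal

/-- Space-time vertices of oriented percolation on `ℤ^d × ℤ`. -/
abbrev Vert (d : ℕ) := (Fin d → ℤ) × ℤ
/-- Oriented bonds. -/
abbrev Bond (d : ℕ) := Vert d × Vert d
/-- Bond configurations. -/
abbrev Config (d : ℕ) := Bond d → Bool

variable {d : ℕ}

/-- The bond `b` is occupied in `ω`. -/
def Occ (ω : Config d) (b : Bond d) : Prop := ω b = true

/-- `Conn ω u x`: `u → x`, i.e. there is a path of occupied oriented bonds from `u` to `x`. -/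
inductive Conn (ω : Config d) : Vert d → Vert d → Prop
  | refl (v : Vert d) : Conn ω v v
  | step {u v w : Vert d} : Occ ω (u, v) → Conn ω v w → Conn ω u w

/-- The connection event `{u → x}`. -/
def connEvent (u x : Vert d) : Set (Config d) := {ω | Conn ω u x}

/-- The event `{b → x}`: `b` is occupied and its top endpoint is connected to `x`. -/
def bondConnEvent (b : Bond d) (x : Vert d) : Set (Config d) :=
  {ω | Occ ω b ∧ Conn ω b.2 x}

/-- `E` occurs on the bond set `B` in configuration `ω`. -/
def OccursOn (E : Set (Config d)) (B : Set (Bond d)) (ω : Config d) : Prop :=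
  ∀ ω' : Config d, (∀ b ∈ B, ω' b = ω b) → ω' ∈ E

/-- Disjoint occurrence `E₁ ∘ E₂`. -/
def DisjOcc (E₁ E₂ : Set (Config d)) : Set (Config d) :=
  {ω | ∃ B₁ B₂ : Set (Bond d), Disjoint B₁ B₂ ∧ OccursOn E₁ B₁ ω ∧ OccursOn E₂ B₂ ω}

/-- Triple disjoint occurrence `E₁ ∘ E₂ ∘ E₃`. -/
def DisjOcc3 (E₁ E₂ E₃ : Set (Config d)) : Set (Config d) :=
  {ω | ∃ B₁ B₂ B₃ : Set (Bond d), Disjoint B₁ B₂ ∧ Disjoint B₁ B₃ ∧ Disjoint B₂ B₃ ∧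
    OccursOn E₁ B₁ ω ∧ OccursOn E₂ B₂ ω ∧ OccursOn E₃ B₃ ω}

/-- The double-connection event `{u ⇒ v}`: two bond-disjoint occupied paths from `u` to `v`. -/
def DoubleConn (u v : Vert d) : Set (Config d) := DisjOcc (connEvent u v) (connEvent u v)

/-- Configuration with the status of bond `b` set to `val`. -/
def flipBond (ω : Config d) (b : Bond d) (val : Bool) : Config d :=
  fun b' => if b' = b then val else ω b'

/-- `b ∈ piv(v, x)`: `b` is pivotal for `{v → x}` in `ω`. -/
def Pivotal (ω : Config d) (b : Bond d) (v x : Vert d) : Prop :=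
  Conn (flipBond ω b true) v x ∧ ¬ Conn (flipBond ω b false) v x

/-- Connection avoiding the bond `b`. -/
inductive ConnAvoid (ω : Config d) (b : Bond d) : Vert d → Vert d → Prop
  | refl (v : Vert d) : ConnAvoid ω b v v
  | step {u v w : Vert d} : (u, v) ≠ b → Occ ω (u, v) → ConnAvoid ω b v w →
      ConnAvoid ω b u w

/-- `C̃^b(y)`: vertices reachable from `y` without using the bond `b`. -/
def tilC (ω : Config d) (b : Bond d) (y : Vert d) : Set (Vert d) :=
  {x | ConnAvoid ω b y x}

/-- The lace-expansion event `E(b, x; C̃^b(y))`: `b → x` with `x ∈ C̃^b(y)` and no pivotal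
bond for `{b̄ → x}` has its bottom endpoint in `C̃^b(y)`. -/
def Eevent (b : Bond d) (x y : Vert d) : Set (Config d) :=
  {ω | Occ ω b ∧ Conn ω b.2 x ∧ x ∈ tilC ω b y ∧
    ∀ b' : Bond d, Pivotal ω b' b.2 x → b'.1 ∉ tilC ω b y}
/-- `μ` is the law of oriented percolation with bond-occupation kernel `q`: a probability
measure under which bonds are independently occupied, bond `(u,v)` with probability
`q u v`, and only bonds pointing one step forward in time may be occupied. -/
def IsBernoulliField (μ : Measure (Config d)) (q : Vert d → Vert d → ℝ≥0∞) : Prop :=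
  IsProbabilityMeasure μ ∧ (∀ u v : Vert d, q u v ≤ 1) ∧
  (∀ u v : Vert d, v.2 ≠ u.2 + 1 → q u v = 0) ∧
  ∀ (s : Finset (Bond d)) (f : Bond d → Bool),
    μ {ω | ∀ b ∈ s, ω b = f b} =
      ∏ b ∈ s, (if f b then q b.1 b.2 else 1 - q b.1 b.2)

/-- The lace-expansion event `Ẽ^{(N)}_{b⃗}(x)` (for `N ≥ 1`), with `b̲_{N+1} = x` and
`b̄₀ = o`. -/
def laceEvent (N : ℕ) (bb : Fin N → Bond d) (x : Vert d) : Set (Config d) :=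
  {ω | (∀ h0 : 0 < N, ω ∈ DoubleConn (0 : Vert d) (bb ⟨0, h0⟩).1) ∧
    ∀ i : Fin N, ω ∈ Eevent (bb i)
      (if h : i.1 + 1 < N then (bb ⟨i.1 + 1, h⟩).1 else x)
      (if h : 0 < i.1 then
        (bb ⟨i.1 - 1, lt_of_le_of_lt (Nat.sub_le _ _) i.isLt⟩).2 else (0 : Vert d))}

/-- The lace-expansion coefficients `π_p^{(N)}(x)`. -/
noncomputable def piCoef (μ : Measure (Config d)) : ℕ → Vert d → ℝ≥0∞
  | 0, x => μ (DoubleConn 0 x)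
  | (N + 1), x => ∑' bb : Fin (N + 1) → Bond d, μ (laceEvent (N + 1) bb x)

/-- Two-point function `φ_p(x) = P_p(o → x)`. -/
noncomputable def phi (μ : Measure (Config d)) : Vert d → ℝ≥0∞ :=
  fun x => μ (connEvent 0 x)

/-- Space-time convolution of translation-invariant kernels. -/
noncomputable def conv (f g : Vert d → ℝ≥0∞) : Vert d → ℝ≥0∞ :=
  fun x => ∑' v, f v * g (x - v)

/-- `m`-weighting: `f^{(m)}(x) = f(x) m^{τ_x}`. -/
noncomputable def wt (m : ℝ≥0∞) (f : Vert d → ℝ≥0∞) : Vert d → ℝ≥0∞ :=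
  fun x => f x * m ^ x.2

/-- The weighted open triangle
`T_p^{(m)} = sup_x Σ_v (q*φ*φ)(v) · (m q * φ^{(m)})(x; v)`. -/
noncomputable def Tri (μ : Measure (Config d)) (q : Vert d → ℝ≥0∞) (m : ℝ≥0∞) : ℝ≥0∞ :=
  ⨆ x : Vert d, ∑' v : Vert d,
    conv (conv q (phi μ)) (phi μ) v * conv (wt m q) (wt m (phi μ)) (v - x)
/-- Two-point function between two space-time points. -/
noncomputable def phi2 (μ : Measure (Config d)) (u x : Vert d) : ℝ≥0∞ :=
  μ (connEvent u x)

/-- `(q_p * φ_p)(u; x)`. -/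
noncomputable def qphi (μ : Measure (Config d)) (q : Vert d → ℝ≥0∞) (u x : Vert d) :
    ℝ≥0∞ :=
  ∑' w : Vert d, q (w - u) * phi2 μ w x

/-- `Ξ_p(u,v;u',v') = (ξ^∥ + ξ^×)(u,v;u',v') φ_p(u';v') / 2^{δ_{u',v'}}`. -/
noncomputable def Xi (μ : Measure (Config d)) (q : Vert d → ℝ≥0∞)
    (u v u' v' : Vert d) : ℝ≥0∞ :=
  (qphi μ q u u' * qphi μ q v v' + qphi μ q u v' * qphi μ q v u') * phi2 μ u' v' /
    (if u' = v' then 2 else 1)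

/-! ### The BK inequality for increasing events -/

section BK

variable {B : Type*}

/-- The increasing event that all elements of some witness `S ∈ W` are occupied. -/
def witEv (W : Set (Finset B)) : Set (B → Bool) := {ω | ∃ S ∈ W, ∀ b ∈ S, ω b = true}

lemma witEv_mono {W W' : Set (Finset B)} (h : W ⊆ W') : witEv W ⊆ witEv W' :=
  fun _ ⟨S, hS, hω⟩ => ⟨S, h hS, hω⟩

variable [DecidableEq B]

/-- Expectation of `f` (a function of the random set of occupied elements of `Λ`) when every
`b ∈ Λ` is occupied independently with probability `p b`. -/
noncomputable def bernE (p : B → ℝ≥0∞) (Λ : Finset B) (f : Finset B → ℝ≥0∞) : ℝ≥0∞ :=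
  ∑ V ∈ Λ.powerset, (∏ b ∈ Λ, if b ∈ V then p b else 1 - p b) * f V

open Classical in
/-- Indicator of a proposition. -/
noncomputable def ind (P : Prop) : ℝ≥0∞ := if P then 1 else 0

lemma ind_mono {P Q : Prop} (h : P → Q) : ind P ≤ ind Q := by
  unfold ind
  split_ifs <;> first | (exfalso; tauto) | simp

lemma ind_add_le {P Q R S : Prop} (h : P → R ∨ S) (h' : Q → R ∧ S) :
    ind P + ind Q ≤ ind R + ind S := by
  unfold ind
  split_ifs <;> first | (exfalso; tauto) | simp

lemma ind_and {P Q R : Prop} (h : P ↔ Q ∧ R) : ind P = ind Q * ind R := by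
  unfold ind
  split_ifs <;> first | (exfalso; tauto) | simp

lemma bernE_mono (p : B → ℝ≥0∞) (Λ : Finset B) {f g : Finset B → ℝ≥0∞}
    (h : ∀ V, f V ≤ g V) : bernE p Λ f ≤ bernE p Λ g := by
  unfold bernE
  gcongr with V
  exact h V

lemma bernE_add (p : B → ℝ≥0∞) (Λ : Finset B) (f g : Finset B → ℝ≥0∞) :
    bernE p Λ (fun V => f V + g V) = bernE p Λ f + bernE p Λ g := by
  simp [bernE, mul_add, Finset.sum_add_distrib]

lemma bernE_const_mul (p : B → ℝ≥0∞) (Λ : Finset B) (f : Finset B → ℝ≥0∞) (c : ℝ≥0∞) :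
    bernE p Λ (fun V => c * f V) = c * bernE p Λ f := by
  simp only [bernE, Finset.mul_sum]
  exact Finset.sum_congr rfl fun V _ => by ring

lemma bernE_insert (p : B → ℝ≥0∞) (Λ : Finset B) (e : B) (he : e ∉ Λ)
    (f : Finset B → ℝ≥0∞) :
    bernE p (insert e Λ) f =
      p e * bernE p Λ (fun V => f (insert e V)) + (1 - p e) * bernE p Λ f := by
  unfold bernE
  rw [Finset.sum_powerset_insert he, add_comm, Finset.mul_sum, Finset.mul_sum]
  congr 1
  · refine Finset.sum_congr rfl fun V _ => ?_
    rw [Finset.prod_insert he, if_pos (Finset.mem_insert_self _ _), mul_assoc]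
    congr 2
    refine Finset.prod_congr rfl fun b hb => ?_
    have hbe : b ≠ e := fun h => he (h ▸ hb)
    simp [hbe]
  · refine Finset.sum_congr rfl fun V hV => ?_
    have heV : e ∉ V := fun h => he (Finset.mem_powerset.1 hV h)
    rw [Finset.prod_insert he, if_neg heV, mul_assoc]

/-- BK inequality on a finite set, for an arbitrary family `F` of pairs of witnesses: finding a
disjoint pair in one configuration is at most as likely as finding a pair whose two members are
occupied in two independent configurations. Elements are duplicated one at a time. -/
lemma bk_pairs (p : B → ℝ≥0∞) (hp : ∀ b, p b ≤ 1) (Λ : Finset B) :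
    ∀ F : Finset B → Finset B → Prop,
      bernE p Λ (fun V => ind (∃ S T, F S T ∧ S ⊆ V ∧ T ⊆ V ∧ Disjoint S T)) ≤
        bernE p Λ (fun V => bernE p Λ (fun V' => ind (∃ S T, F S T ∧ S ⊆ V ∧ T ⊆ V'))) := by
  induction Λ using Finset.induction_on with
  | empty =>
    intro F
    simp only [bernE, Finset.powerset_empty, Finset.sum_singleton, Finset.prod_empty, one_mul]
    exact ind_mono fun ⟨S, T, h, hS, hT, _⟩ => ⟨S, T, h, hS, hT⟩
  | insert e Λ he ih =>
    intro F
    -- pairs usable when `e` is occupied: at most one member of the pair contains `e`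
    let F₁ : Finset B → Finset B → Prop :=
      fun S T => F S T ∨ F (insert e S) T ∨ F S (insert e T)
    let r : (Finset B → Finset B → Prop) → Finset B → Finset B → ℝ≥0∞ :=
      fun G V V' => ind (∃ S T, G S T ∧ S ⊆ V ∧ T ⊆ V')
    let R : (Finset B → Finset B → ℝ≥0∞) → ℝ≥0∞ :=
      fun g => bernE p Λ (fun V => bernE p Λ (fun V' => g V V'))
    have hRmono : ∀ g g' : Finset B → Finset B → ℝ≥0∞, (∀ V V', g V V' ≤ g' V V') →
        R g ≤ R g' := fun g g' h => bernE_mono _ _ fun V => bernE_mono _ _ fun V' => h V V'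
    have hRadd : ∀ g g' : Finset B → Finset B → ℝ≥0∞,
        R (fun V V' => g V V' + g' V V') = R g + R g' := by
      intro g g'
      simp only [R, bernE_add]
    have hL1 : bernE p Λ (fun V => ind (∃ S T, F S T ∧ S ⊆ insert e V ∧ T ⊆ insert e V ∧
        Disjoint S T)) ≤ R (r F₁) := by
      refine le_trans (bernE_mono _ _ fun V => ?_) (ih F₁)
      refine ind_mono ?_
      rintro ⟨S, T, h, hS, hT, hd⟩
      refine ⟨S.erase e, T.erase e, ?_, ?_, ?_, ?_⟩
      · by_cases hSe : e ∈ S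
        · have hTe : e ∉ T := Finset.disjoint_left.1 hd hSe
          right; left
          rwa [Finset.insert_erase hSe, Finset.erase_eq_of_notMem hTe]
        · by_cases hTe : e ∈ T
          · right; right
            rwa [Finset.insert_erase hTe, Finset.erase_eq_of_notMem hSe]
          · left
            rwa [Finset.erase_eq_of_notMem hTe, Finset.erase_eq_of_notMem hSe]
      · rwa [Finset.subset_insert_iff] at hS
      · rwa [Finset.subset_insert_iff] at hT
      · exact hd.mono (Finset.erase_subset _ _) (Finset.erase_subset _ _)
    have hL0 := ih F
    have h11 : R (r F₁) ≤ R (fun V V' => r F (insert e V) (insert e V')) := by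
      refine hRmono _ _ fun V V' => ?_
      refine ind_mono ?_
      rintro ⟨S, T, h | h | h, hS, hT⟩
      · exact ⟨S, T, h, hS.trans (Finset.subset_insert _ _), hT.trans (Finset.subset_insert _ _)⟩
      · exact ⟨_, T, h, Finset.insert_subset_insert _ hS, hT.trans (Finset.subset_insert _ _)⟩
      · exact ⟨S, _, h, hS.trans (Finset.subset_insert _ _), Finset.insert_subset_insert _ hT⟩
    -- inclusion-exclusion for the two events where exactly one copy of `e` is occupied
    have h10 : R (r F₁) + R (r F) ≤
        R (fun V V' => r F (insert e V) V') + R (fun V V' => r F V (insert e V')) := by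
      rw [← hRadd, ← hRadd]
      refine hRmono _ _ fun V V' => ?_
      have hA : (∃ S T, F S T ∧ S ⊆ V ∧ T ⊆ V') →
          (∃ S T, F S T ∧ S ⊆ insert e V ∧ T ⊆ V') := by
        rintro ⟨S, T, h, hS, hT⟩
        exact ⟨S, T, h, hS.trans (Finset.subset_insert _ _), hT⟩
      have hB : (∃ S T, F S T ∧ S ⊆ V ∧ T ⊆ V') →
          (∃ S T, F S T ∧ S ⊆ V ∧ T ⊆ insert e V') := by
        rintro ⟨S, T, h, hS, hT⟩
        exact ⟨S, T, h, hS, hT.trans (Finset.subset_insert _ _)⟩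
      have hC : (∃ S T, F₁ S T ∧ S ⊆ V ∧ T ⊆ V') →
          (∃ S T, F S T ∧ S ⊆ insert e V ∧ T ⊆ V') ∨
          (∃ S T, F S T ∧ S ⊆ V ∧ T ⊆ insert e V') := by
        rintro ⟨S, T, h | h | h, hS, hT⟩
        · exact Or.inl (hA ⟨S, T, h, hS, hT⟩)
        · exact Or.inl ⟨_, T, h, Finset.insert_subset_insert _ hS, hT⟩
        · exact Or.inr ⟨S, _, h, hS, Finset.insert_subset_insert _ hT⟩
      exact ind_add_le hC fun h => ⟨hA h, hB h⟩
    have hsplit : bernE p (insert e Λ) (fun V => bernE p (insert e Λ) (fun V' => r F V V')) =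
        p e * p e * R (fun V V' => r F (insert e V) (insert e V')) +
        p e * (1 - p e) * (R (fun V V' => r F (insert e V) V') +
          R (fun V V' => r F V (insert e V'))) +
        (1 - p e) * (1 - p e) * R (r F) := by
      simp only [bernE_insert p Λ e he, bernE_add, bernE_const_mul, R]
      ring
    have hpq : p e + (1 - p e) = 1 := add_tsub_cancel_of_le (hp e)
    change _ ≤ bernE p (insert e Λ) (fun V => bernE p (insert e Λ) (fun V' => r F V V'))
    rw [hsplit, bernE_insert p Λ e he]
    set a := p e
    set c := 1 - p e
    calc _ ≤ a * R (r F₁) + c * R (r F) := by gcongr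
      _ = (a + c) * (a * R (r F₁) + c * R (r F)) := by rw [hpq, one_mul]
      _ = a * a * R (r F₁) + a * c * (R (r F₁) + R (r F)) + c * c * R (r F) := by ring
      _ ≤ _ := by gcongr

/-- Witnesses for the disjoint occurrence of the events witnessed by `W₁` and `W₂`. -/
def disjW (W₁ W₂ : Set (Finset B)) : Set (Finset B) :=
  {U | ∃ S ∈ W₁, ∃ T ∈ W₂, Disjoint S T ∧ U = S ∪ T}

/-- `μ` makes the coordinates independent with `P(ω b = true) = p b`. -/
def IsBern (μ : Measure (B → Bool)) (p : B → ℝ≥0∞) : Prop :=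
  (∀ b, p b ≤ 1) ∧ ∀ (s : Finset B) (f : B → Bool),
    μ {ω | ∀ b ∈ s, ω b = f b} = ∏ b ∈ s, (if f b then p b else 1 - p b)

lemma measure_cyl {μ : Measure (B → Bool)} {p : B → ℝ≥0∞} (h : IsBern μ p)
    (Λ : Finset B) (A : Finset B → Prop) :
    μ {ω | A (Λ.filter (fun b => ω b = true))} = bernE p Λ (fun V => ind (A V)) := by
  classical
  have hset : {ω : B → Bool | A (Λ.filter (fun b => ω b = true))} =
      ⋃ V ∈ Λ.powerset.filter A, {ω : B → Bool | ∀ b ∈ Λ, ω b = decide (b ∈ V)} := by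
    ext ω
    simp only [Set.mem_ofPred_eq, Set.mem_iUnion, Finset.mem_filter, Finset.mem_powerset,
      exists_prop]
    constructor
    · intro hA
      refine ⟨_, ⟨Finset.filter_subset _ _, hA⟩, fun b hb => ?_⟩
      simp [hb]
    · rintro ⟨V, ⟨hV, hA⟩, hω⟩
      convert hA
      ext b
      constructor
      · intro hb
        rw [Finset.mem_filter] at hb
        have := hω b hb.1
        rw [hb.2] at this
        simpa using this.symm
      · intro hb
        rw [Finset.mem_filter]
        exact ⟨hV hb, by rw [hω b (hV hb)]; simpa using hb⟩
  rw [hset, measure_biUnion_finset, Finset.sum_filter]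
  · unfold bernE
    refine Finset.sum_congr rfl fun V _ => ?_
    rw [h.2 Λ (fun b => decide (b ∈ V))]
    by_cases hA : A V <;> simp [ind, hA]
  · intro V hV V' hV' hne
    rw [Function.onFun, Set.disjoint_left]
    intro ω h1 h2
    apply hne
    simp only [Finset.coe_filter, Finset.mem_powerset, Set.mem_ofPred_eq] at hV hV' h1 h2
    ext b
    constructor
    · intro hb
      have := (h1 b (hV.1 hb)).symm.trans (h2 b (hV.1 hb))
      simpa [hb] using this
    · intro hb
      have := (h1 b (hV'.1 hb)).symm.trans (h2 b (hV'.1 hb))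
      simpa [hb] using this
  · intro V _
    have : {ω : B → Bool | ∀ b ∈ Λ, ω b = decide (b ∈ V)} =
        ⋂ b ∈ Λ, (fun ω : B → Bool => ω b) ⁻¹' {decide (b ∈ V)} := by
      ext ω; simp
    rw [this]
    exact Finset.measurableSet_biInter _ fun b _ =>
      measurable_pi_apply b (measurableSet_singleton _)

lemma bk_finite {μ : Measure (B → Bool)} {p : B → ℝ≥0∞} (h : IsBern μ p)
    (Λ : Finset B) (W₁ W₂ : Set (Finset B)) :
    μ (witEv (disjW {S ∈ W₁ | S ⊆ Λ} {S ∈ W₂ | S ⊆ Λ})) ≤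
      μ (witEv {S ∈ W₁ | S ⊆ Λ}) * μ (witEv {S ∈ W₂ | S ⊆ Λ}) := by
  have e1 : ∀ W : Set (Finset B), witEv {S ∈ W | S ⊆ Λ} =
      {ω | (fun V => ∃ S, S ∈ W ∧ S ⊆ V) (Λ.filter (fun b => ω b = true))} := by
    intro W
    ext ω
    constructor
    · rintro ⟨S, ⟨hS, hSΛ⟩, hω⟩
      exact ⟨S, hS, fun b hb => Finset.mem_filter.2 ⟨hSΛ hb, hω b hb⟩⟩
    · rintro ⟨S, hS, hω⟩
      exact ⟨S, ⟨hS, fun b hb => (Finset.mem_filter.1 (hω hb)).1⟩,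
        fun b hb => (Finset.mem_filter.1 (hω hb)).2⟩
  have e2 : witEv (disjW {S ∈ W₁ | S ⊆ Λ} {S ∈ W₂ | S ⊆ Λ}) =
      {ω | (fun V => ∃ S T, (S ∈ W₁ ∧ T ∈ W₂) ∧ S ⊆ V ∧ T ⊆ V ∧ Disjoint S T)
        (Λ.filter (fun b => ω b = true))} := by
    ext ω
    constructor
    · rintro ⟨U, ⟨S, ⟨hS, hSΛ⟩, T, ⟨hT, hTΛ⟩, hd, rfl⟩, hω⟩
      exact ⟨S, T, ⟨hS, hT⟩,
        fun b hb => Finset.mem_filter.2 ⟨hSΛ hb, hω b (Finset.mem_union_left _ hb)⟩,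
        fun b hb => Finset.mem_filter.2 ⟨hTΛ hb, hω b (Finset.mem_union_right _ hb)⟩, hd⟩
    · rintro ⟨S, T, ⟨hS, hT⟩, hSω, hTω, hd⟩
      refine ⟨S ∪ T, ⟨S, ⟨hS, fun b hb => (Finset.mem_filter.1 (hSω hb)).1⟩, T,
        ⟨hT, fun b hb => (Finset.mem_filter.1 (hTω hb)).1⟩, hd, rfl⟩, fun b hb => ?_⟩
      rcases Finset.mem_union.1 hb with hb | hb
      · exact (Finset.mem_filter.1 (hSω hb)).2
      · exact (Finset.mem_filter.1 (hTω hb)).2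
  rw [e1, e1, e2, measure_cyl h Λ (fun V => ∃ S, S ∈ W₁ ∧ S ⊆ V),
    measure_cyl h Λ (fun V => ∃ S, S ∈ W₂ ∧ S ⊆ V),
    measure_cyl h Λ (fun V => ∃ S T, (S ∈ W₁ ∧ T ∈ W₂) ∧ S ⊆ V ∧ T ⊆ V ∧ Disjoint S T)]
  refine (bk_pairs p h.1 Λ (fun S T => S ∈ W₁ ∧ T ∈ W₂)).trans (le_of_eq ?_)
  rw [mul_comm, ← bernE_const_mul]
  congr 1
  funext V
  rw [mul_comm, ← bernE_const_mul]
  congr 1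
  funext V'
  refine ind_and ⟨?_, ?_⟩
  · rintro ⟨S, T, ⟨hS, hT⟩, hSV, hTV⟩
    exact ⟨⟨S, hS, hSV⟩, T, hT, hTV⟩
  · rintro ⟨⟨S, hS, hSV⟩, T, hT, hTV⟩
    exact ⟨S, T, ⟨hS, hT⟩, hSV, hTV⟩

/-- BK inequality for two increasing events with finite witnesses. -/
lemma bk_two [Countable B] {μ : Measure (B → Bool)} {p : B → ℝ≥0∞} (h : IsBern μ p)
    (W₁ W₂ : Set (Finset B)) :
    μ (witEv (disjW W₁ W₂)) ≤ μ (witEv W₁) * μ (witEv W₂) := by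
  have hU : witEv (disjW W₁ W₂) =
      ⋃ Λ : Finset B, witEv (disjW {S ∈ W₁ | S ⊆ Λ} {S ∈ W₂ | S ⊆ Λ}) := by
    ext ω
    simp only [Set.mem_iUnion]
    constructor
    · rintro ⟨U, ⟨S, hS, T, hT, hd, rfl⟩, hω⟩
      exact ⟨S ∪ T, S ∪ T, ⟨S, ⟨hS, Finset.subset_union_left⟩, T,
        ⟨hT, Finset.subset_union_right⟩, hd, rfl⟩, hω⟩
    · rintro ⟨Λ, U, ⟨S, hS, T, hT, hd, rfl⟩, hω⟩
      exact ⟨S ∪ T, ⟨S, hS.1, T, hT.1, hd, rfl⟩, hω⟩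
  have hdir : Directed (· ⊆ ·) fun Λ : Finset B =>
      witEv (disjW {S ∈ W₁ | S ⊆ Λ} {S ∈ W₂ | S ⊆ Λ}) := by
    refine Monotone.directed_le fun Λ Λ' hΛ => witEv_mono ?_
    rintro U ⟨S, hS, T, hT, hd, rfl⟩
    exact ⟨S, ⟨hS.1, hS.2.trans hΛ⟩, T, ⟨hT.1, hT.2.trans hΛ⟩, hd, rfl⟩
  rw [hU, hdir.measure_iUnion]
  refine iSup_le fun Λ => (bk_finite h Λ W₁ W₂).trans ?_
  gcongr
  · exact witEv_mono fun S hS => hS.1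
  · exact witEv_mono fun S hS => hS.1

/-- BK inequality for finitely many increasing events with finite witnesses. -/
lemma bk_family [Countable B] {μ : Measure (B → Bool)} [IsProbabilityMeasure μ]
    {p : B → ℝ≥0∞} (h : IsBern μ p) {ι : Type*} [DecidableEq ι] (K : ι → Set (Finset B))
    (s : Finset ι) :
    μ (witEv {U | ∃ T : ι → Finset B, (∀ i ∈ s, T i ∈ K i) ∧
        (∀ i ∈ s, ∀ j ∈ s, i ≠ j → Disjoint (T i) (T j)) ∧ U = s.biUnion T}) ≤
      ∏ i ∈ s, μ (witEv (K i)) := by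
  induction s using Finset.induction_on with
  | empty => simpa using prob_le_one
  | insert a s ha ih =>
    rw [Finset.prod_insert ha]
    refine le_trans ?_ ((bk_two h _ _).trans (mul_le_mul_right ih _))
    refine measure_mono (witEv_mono ?_)
    rintro U ⟨T, hT, hd, rfl⟩
    refine ⟨T a, hT a (Finset.mem_insert_self _ _), s.biUnion T,
      ⟨T, fun i hi => hT i (Finset.mem_insert_of_mem hi), fun i hi j hj =>
        hd i (Finset.mem_insert_of_mem hi) j (Finset.mem_insert_of_mem hj), rfl⟩, ?_, ?_⟩
    · rw [Finset.disjoint_biUnion_right]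
      intro i hi
      exact hd a (Finset.mem_insert_self _ _) i (Finset.mem_insert_of_mem hi)
        (fun h => ha (h ▸ hi))
    · rw [Finset.biUnion_insert]

end BK

/-! ### Space-time trajectories -/

/-- Every occupied bond goes one step forward in time. -/
def Ori (ω : Config d) : Prop := ∀ b : Bond d, ω b = true → b.2.2 = b.1.2 + 1

/-- A path of an oriented configuration, parametrised by time: `γ t` is its spatial position at
time `t`. Only the values on the relevant time interval matter. -/
abbrev Traj (d : ℕ) := ℤ → (Fin d → ℤ)

/-- The bond used by `γ` from time `t` to time `t + 1`. -/
def bd (γ : Traj d) (t : ℤ) : Bond d := ((γ t, t), (γ (t + 1), t + 1))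

/-- The trajectory `γ` passes through the space-time vertex `v`. -/
def Thru (γ : Traj d) (v : Vert d) : Prop := γ v.2 = v.1

/-- All bonds of `γ` between times `s` and `t` are occupied. -/
def OccOn (ω : Config d) (γ : Traj d) (s t : ℤ) : Prop :=
  ∀ r, s ≤ r → r < t → ω (bd γ r) = true

/-- The bonds of `γ` between times `s` and `t`. -/
noncomputable def seg (γ : Traj d) (s t : ℤ) : Finset (Bond d) := (Finset.Ico s t).image (bd γ)

/-- Follow `γ` until time `p` and `η` afterwards. -/
def glue (γ η : Traj d) (p : ℤ) : Traj d := fun t => if t ≤ p then γ t else η t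

lemma glue_le {γ η : Traj d} {p t : ℤ} (h : t ≤ p) : glue γ η p t = γ t := if_pos h

lemma glue_ge {γ η : Traj d} {p t : ℤ} (hp : γ p = η p) (h : p ≤ t) : glue γ η p t = η t := by
  rcases h.eq_or_lt with rfl | h
  · rw [glue_le le_rfl, hp]
  · exact if_neg (not_le.2 h)

lemma bd_glue_lt {γ η : Traj d} {p t : ℤ} (h : t < p) : bd (glue γ η p) t = bd γ t := by
  unfold bd
  rw [glue_le h.le, glue_le (by omega)]

lemma bd_glue_ge {γ η : Traj d} {p t : ℤ} (hp : γ p = η p) (h : p ≤ t) :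
    bd (glue γ η p) t = bd η t := by
  unfold bd
  rw [glue_ge hp h, glue_ge hp (by omega)]

lemma bd_eq {γ η : Traj d} {t t' : ℤ} :
    bd γ t = bd η t' ↔ t = t' ∧ γ t = η t ∧ γ (t + 1) = η (t + 1) := by
  unfold bd
  simp only [Prod.mk.injEq]
  constructor
  · rintro ⟨⟨h1, rfl⟩, h2, -⟩
    exact ⟨rfl, h1, h2⟩
  · rintro ⟨rfl, h1, h2⟩
    exact ⟨⟨h1, rfl⟩, h2, rfl⟩

lemma OccOn.glue {ω : Config d} {γ η : Traj d} {s p t : ℤ} (hp : γ p = η p)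
    (h1 : OccOn ω γ s p) (h2 : OccOn ω η p t) : OccOn ω (glue γ η p) s t := by
  intro r hsr hrt
  rcases lt_or_ge r p with h | h
  · rw [bd_glue_lt h]
    exact h1 r hsr h
  · rw [bd_glue_ge hp h]
    exact h2 r h hrt

lemma OccOn.mono {ω : Config d} {γ : Traj d} {s s' t t' : ℤ} (h : OccOn ω γ s t)
    (hs : s ≤ s') (ht : t' ≤ t) : OccOn ω γ s' t' :=
  fun r h1 h2 => h r (hs.trans h1) (h2.trans_le ht)

lemma conn_of_traj {ω : Config d} (γ : Traj d) (s t : ℤ) (hst : s ≤ t)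
    (h : OccOn ω γ s t) : Conn ω (γ s, s) (γ t, t) := by
  obtain ⟨n, rfl⟩ : ∃ n : ℕ, t = s + n := ⟨(t - s).toNat, by omega⟩
  clear hst
  induction n generalizing s with
  | zero => simpa using Conn.refl _
  | succ n ih =>
    have e : s + ((n + 1 : ℕ) : ℤ) = s + 1 + n := by push_cast; ring
    rw [e] at h ⊢
    exact Conn.step (h s le_rfl (by omega)) (ih (s + 1) (h.mono (by omega) le_rfl))

lemma conn_of_thru {ω : Config d} {u x : Vert d} (h : u.2 ≤ x.2) {γ : Traj d}
    (hu : Thru γ u) (hx : Thru γ x) (hγ : OccOn ω γ u.2 x.2) : Conn ω u x := by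
  have := conn_of_traj γ u.2 x.2 h hγ
  rwa [hu, hx] at this

lemma traj_of_conn {ω : Config d} (hω : Ori ω) {u x : Vert d} (h : Conn ω u x) :
    u.2 ≤ x.2 ∧ ∃ γ : Traj d, Thru γ u ∧ Thru γ x ∧ OccOn ω γ u.2 x.2 := by
  induction h with
  | refl v => exact ⟨le_rfl, fun _ => v.1, rfl, rfl, fun r h1 h2 => absurd h1 (not_le.2 h2)⟩
  | @step u v w huv _ ih =>
    obtain ⟨hle, γ, hv, hw, hγ⟩ := ih
    have ht : v.2 = u.2 + 1 := hω _ huv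
    have hg : ∀ t, u.2 < t → Function.update γ u.2 u.1 t = γ t := fun t h =>
      Function.update_of_ne h.ne' _ _
    refine ⟨by omega, Function.update γ u.2 u.1, Function.update_self .., ?_, ?_⟩
    · unfold Thru
      rw [hg _ (by omega)]
      exact hw
    · intro r h1 h2
      rcases h1.eq_or_lt with rfl | h1
      · have : bd (Function.update γ u.2 u.1) u.2 = (u, v) := by
          unfold bd
          rw [Function.update_self, hg _ (by omega), ← ht, hv]
        rw [this]
        exact huv
      · have : bd (Function.update γ u.2 u.1) r = bd γ r := by
          unfold bd
          rw [hg _ h1, hg _ (by omega)]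
        rw [this]
        exact hγ r (by omega) h2

/-! ### Two disjoint paths from the pivotal condition -/

lemma occ_flip {ω : Config d} {b b' : Bond d} :
    flipBond ω b false b' = true ↔ b' ≠ b ∧ ω b' = true := by
  unfold flipBond
  split_ifs with h <;> simp [h]

lemma mem_tilC_iff {ω : Config d} {b : Bond d} {x y : Vert d} :
    x ∈ tilC ω b y ↔ Conn (flipBond ω b false) y x := by
  constructor
  · intro h
    change ConnAvoid ω b y x at h
    induction h with
    | refl v => exact .refl v
    | step h1 h2 _ ih => exact .step (occ_flip.2 ⟨h1, h2⟩) ih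
  · intro h
    change ConnAvoid ω b y x
    induction h with
    | refl v => exact .refl v
    | step h1 _ ih => exact .step (occ_flip.1 h1).1 (occ_flip.1 h1).2 ih

lemma Ori.flip {ω : Config d} (hω : Ori ω) (b : Bond d) : Ori (flipBond ω b false) :=
  fun b' h => hω b' (occ_flip.1 h).2

lemma Conn.mono {ω ω' : Config d} (h : ∀ b, ω b = true → ω' b = true) {u x : Vert d}
    (hc : Conn ω u x) : Conn ω' u x := by
  induction hc with
  | refl v => exact .refl v
  | step h1 _ ih => exact .step (h _ h1) ih

lemma Conn.trans {ω : Config d} {u v x : Vert d} (h : Conn ω u v) (hvx : Conn ω v x) :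
    Conn ω u x := by
  induction h with
  | refl v => exact hvx
  | step h1 _ ih => exact .step h1 (ih hvx)

/-- Bond-disjoint occupied paths end at `z`: one, `α`, starts with the bond `b`, and the other,
`β`, starts at `y`. -/
def TwoPaths (ω : Config d) (b : Bond d) (y z : Vert d) (α β : Traj d) : Prop :=
  b.2.2 ≤ z.2 ∧ Thru α b.1 ∧ Thru α b.2 ∧ Thru α z ∧ Thru β y ∧ Thru β z ∧
    OccOn ω α b.1.2 z.2 ∧ OccOn ω β y.2 z.2 ∧ ∀ t, b.1.2 ≤ t → t < z.2 → bd α t ≠ bd β t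

lemma bd_of_thru {b : Bond d} (hb : b.2.2 = b.1.2 + 1) {α : Traj d} (h1 : Thru α b.1)
    (h2 : Thru α b.2) : bd α b.1.2 = b := by
  unfold bd
  rw [h1, ← hb, h2]

lemma bd_ne_of_time {b : Bond d} {α : Traj d} {t : ℤ} (h : t ≠ b.1.2) : bd α t ≠ b := by
  rintro rfl
  exact h rfl

lemma TwoPaths.mem_tilC {ω : Config d} {b : Bond d} (hb : b.2.2 = b.1.2 + 1) {y z : Vert d}
    (hy : y.2 ≤ b.1.2) {α β : Traj d} (h : TwoPaths ω b y z α β) : z ∈ tilC ω b y := by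
  obtain ⟨hz, h1, h2, -, h4, h5, -, h7, h8⟩ := h
  refine mem_tilC_iff.2 (conn_of_thru (by omega) h4 h5 fun r hr1 hr2 => occ_flip.2 ⟨?_, h7 r hr1 hr2⟩)
  by_cases hr : r = b.1.2
  · subst hr
    have := h8 _ le_rfl hr2
    rw [bd_of_thru hb h1 h2] at this
    exact this.symm
  · exact bd_ne_of_time hr

/-- A pair of disjoint paths exists to the first vertex, on a path from `b`, of the cluster of `y`:
before that vertex the path stays outside the cluster. -/
lemma exists_twoPaths {ω : Config d} (hω : Ori ω) {b : Bond d} {x y : Vert d}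
    (hy : y.2 ≤ b.1.2) (h : ω ∈ Eevent b x y) :
    ∃ z α β, TwoPaths ω b y z α β ∧ Conn ω z x ∧ z.2 ≤ x.2 := by
  obtain ⟨hb, hconn, hx, -⟩ := h
  have hbt : b.2.2 = b.1.2 + 1 := hω _ hb
  obtain ⟨hle, γ, hγb, hγx, hγ⟩ := traj_of_conn hω hconn
  obtain ⟨t, ⟨ht1, ht2⟩, hmin⟩ := Int.exists_least_of_bdd
    (P := fun t => b.2.2 ≤ t ∧ ((γ t, t) : Vert d) ∈ tilC ω b y) ⟨b.2.2, fun t h => h.1⟩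
    ⟨x.2, hle, by rw [hγx]; exact hx⟩
  have htx : t ≤ x.2 := hmin x.2 ⟨hle, by rw [hγx]; exact hx⟩
  obtain ⟨hyt, β, hβy, hβt, hβ⟩ := traj_of_conn (hω.flip b) (mem_tilC_iff.1 ht2)
  have hg : ∀ s, b.1.2 < s → Function.update γ b.1.2 b.1.1 s = γ s := fun s h =>
    Function.update_of_ne h.ne' _ _
  have hbd : ∀ s, b.1.2 < s → bd (Function.update γ b.1.2 b.1.1) s = bd γ s := by
    intro s hs
    unfold bd
    rw [hg _ hs, hg _ (by omega)]
  have h1 : Thru (Function.update γ b.1.2 b.1.1) b.1 := Function.update_self ..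
  have h2 : Thru (Function.update γ b.1.2 b.1.1) b.2 := by
    unfold Thru
    rw [hg _ (by omega)]
    exact hγb
  refine ⟨(γ t, t), Function.update γ b.1.2 b.1.1, β,
    ⟨ht1, h1, h2, hg _ (by simp only; omega), hβy, hβt, ?_, ?_, ?_⟩, ?_, htx⟩
  · intro r hr1 hr2
    rcases hr1.eq_or_lt with rfl | hr1
    · rw [bd_of_thru hbt h1 h2]
      exact hb
    · rw [hbd _ hr1]
      simp only at hr2
      exact hγ r (by omega) (by omega)
  · exact fun r hr1 hr2 => (occ_flip.1 (hβ r hr1 hr2)).2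
  · intro r hr1 hr2 heq
    simp only at hr2
    rcases hr1.eq_or_lt with rfl | hr1
    · rw [bd_of_thru hbt h1 h2] at heq
      exact (occ_flip.1 (hβ b.1.2 (by omega) hr2)).1 heq.symm
    · rw [hbd _ hr1, bd_eq] at heq
      have : ((γ r, r) : Vert d) ∈ tilC ω b y := by
        rw [mem_tilC_iff, heq.2.1]
        have := conn_of_traj β y.2 r (by omega) (OccOn.mono hβ le_rfl hr2.le)
        rwa [hβy] at this
      have := hmin r ⟨by omega, this⟩
      omega
  · have := conn_of_traj γ t x.2 htx (hγ.mono ht1 le_rfl)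
    rwa [hγx] at this

/-- One augmentation step: as the first bond of a path from `z` to `x` is not pivotal, there is a
path from `b.2` to `x` avoiding it; rerouting along this path, from its last contact with the two
given paths to its next contact with the path from `z` to `x`, gives disjoint paths to a later
vertex. -/
lemma TwoPaths.augment {ω : Config d} (hω : Ori ω) {b : Bond d} {x y z : Vert d}
    (hy : y.2 ≤ b.1.2) (h : ω ∈ Eevent b x y) {α β : Traj d} (hz : TwoPaths ω b y z α β)
    (hzx : Conn ω z x) (hlt : z.2 < x.2) :
    ∃ z' α' β', TwoPaths ω b y z' α' β' ∧ Conn ω z' x ∧ z'.2 ≤ x.2 ∧ z.2 < z'.2 := by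
  obtain ⟨hb, hconn, hx, hpiv⟩ := h
  have hbt : b.2.2 = b.1.2 + 1 := hω _ hb
  have hzC := hz.mem_tilC hbt hy
  obtain ⟨-, ρ, hρz, hρx, hρ⟩ := traj_of_conn hω hzx
  obtain ⟨hbz, hα1, hα2, hαz, hβy, hβz, hα, hβ, hd⟩ := hz
  have hnp : ¬ Pivotal ω (bd ρ z.2) b.2 x := by
    intro hp
    apply hpiv _ hp
    have : (bd ρ z.2).1 = z := by unfold bd; rw [hρz]
    rwa [this]
  have hη : Conn (flipBond ω (bd ρ z.2) false) b.2 x := by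
    by_contra hcon
    refine hnp ⟨hconn.mono fun b' hb' => ?_, hcon⟩
    unfold flipBond
    split_ifs <;> simp [hb']
  obtain ⟨hbx, η, hηb, hηx, hη⟩ := traj_of_conn (hω.flip _) hη
  have hηocc : OccOn ω η b.2.2 x.2 := fun r h1 h2 => (occ_flip.1 (hη r h1 h2)).2
  have hηne : bd η z.2 ≠ bd ρ z.2 := (occ_flip.1 (hη z.2 hbz hlt)).1
  obtain ⟨p, ⟨hp1, hp2, hp3⟩, hpmax⟩ := Int.exists_greatest_of_bdd
    (P := fun t => b.2.2 ≤ t ∧ t ≤ z.2 ∧ (η t = α t ∨ η t = β t)) ⟨z.2, fun t h => h.2.1⟩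
    ⟨b.2.2, le_rfl, hbz, Or.inl (by rw [hηb, hα2])⟩
  obtain ⟨r, ⟨hr1, hr2⟩, hrmin⟩ := Int.exists_least_of_bdd
    (P := fun t => z.2 < t ∧ η t = ρ t) ⟨z.2, fun t h => h.1.le⟩
    ⟨x.2, hlt, by rw [hηx, hρx]⟩
  have hrx : r ≤ x.2 := hrmin x.2 ⟨hlt, by rw [hηx, hρx]⟩
  have hzr : ∀ {γ : Traj d}, Thru γ z → γ z.2 = ρ z.2 := fun hγ => by rw [hγ, hρz]
  have hconn' : Conn ω (ρ r, r) x := by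
    have := conn_of_traj ρ r x.2 hrx (hρ.mono hr1.le le_rfl)
    rwa [hρx] at this
  -- `η` between `p` and `r` shares no bond with the continuations along `ρ`
  have key : ∀ γ : Traj d, Thru γ z → (∀ t, p < t → t ≤ z.2 → η t ≠ γ t) →
      ∀ t, p ≤ t → t < r → bd η t ≠ bd (glue γ ρ z.2) t := by
    intro γ hγz hne t ht1 ht2 heq
    rcases lt_or_ge t z.2 with htz | htz
    · rw [bd_glue_lt htz, bd_eq] at heq
      exact hne (t + 1) (by omega) (by omega) heq.2.2
    · rw [bd_glue_ge (hzr hγz) htz] at heq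
      rcases htz.eq_or_lt with rfl | htz
      · exact hηne heq
      · rw [bd_eq] at heq
        have := hrmin t ⟨htz, heq.2.1⟩
        omega
  have hneα : ∀ t, p < t → t ≤ z.2 → η t ≠ α t := fun t h1 h2 h3 => by
    have := hpmax t ⟨by omega, h2, Or.inl h3⟩
    omega
  have hneβ : ∀ t, p < t → t ≤ z.2 → η t ≠ β t := fun t h1 h2 h3 => by
    have := hpmax t ⟨by omega, h2, Or.inr h3⟩
    omega
  rcases hp3 with hp3 | hp3
  · refine ⟨(ρ r, r), glue α η p, glue β ρ z.2, ⟨by simp only; omega, ?_, ?_, ?_, ?_, ?_, ?_, ?_, ?_⟩,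
      hconn', hrx, hr1⟩
    · exact (glue_le (by omega)).trans hα1
    · exact (glue_le (by omega)).trans hα2
    · exact (glue_ge hp3.symm (by simp only; omega)).trans hr2
    · exact (glue_le (by omega)).trans hβy
    · exact glue_ge (hzr hβz) hr1.le
    · exact OccOn.glue hp3.symm (hα.mono le_rfl hp2) (hηocc.mono hp1 hrx)
    · exact OccOn.glue (hzr hβz) hβ (hρ.mono le_rfl hrx)
    · intro t ht1 ht2
      rcases lt_or_ge t p with htp | htp
      · rw [bd_glue_lt htp, bd_glue_lt (by omega)]
        exact hd t ht1 (by omega)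
      · rw [bd_glue_ge hp3.symm htp]
        exact key β hβz hneβ t htp ht2
  · refine ⟨(ρ r, r), glue α ρ z.2, glue β η p, ⟨by simp only; omega, ?_, ?_, ?_, ?_, ?_, ?_, ?_, ?_⟩,
      hconn', hrx, hr1⟩
    · exact (glue_le (by omega)).trans hα1
    · exact (glue_le (by omega)).trans hα2
    · exact glue_ge (hzr hαz) hr1.le
    · exact (glue_le (by omega)).trans hβy
    · exact (glue_ge hp3.symm (by simp only; omega)).trans hr2
    · exact OccOn.glue (hzr hαz) hα (hρ.mono le_rfl hrx)
    · exact OccOn.glue hp3.symm (hβ.mono le_rfl hp2) (hηocc.mono hp1 hrx)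
    · intro t ht1 ht2
      rcases lt_or_ge t p with htp | htp
      · rw [bd_glue_lt htp, bd_glue_lt (by omega)]
        exact hd t ht1 (by omega)
      · rw [bd_glue_ge hp3.symm htp]
        exact (key α hαz hneα t htp ht2).symm

/-- The lace-expansion event provides two bond-disjoint paths to `x`, from the bond `b` and
from `y`. -/
lemma twoPaths_of_Eevent {ω : Config d} (hω : Ori ω) {b : Bond d} {x y : Vert d}
    (hy : y.2 ≤ b.1.2) (h : ω ∈ Eevent b x y) : ∃ α β, TwoPaths ω b y x α β := by
  obtain ⟨z, α, β, h2, hzx, hle⟩ := exists_twoPaths hω hy h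
  obtain ⟨n, hn⟩ : ∃ n : ℕ, x.2 = z.2 + n := ⟨(x.2 - z.2).toNat, by omega⟩
  induction n using Nat.strong_induction_on generalizing z α β with
  | _ n ih =>
    rcases hle.eq_or_lt with heq | hlt
    · obtain ⟨-, γ, hγz, hγx, -⟩ := traj_of_conn hω hzx
      have : z = x := by
        refine Prod.ext ?_ heq
        rw [← hγz, ← hγx, heq]
      subst this
      exact ⟨α, β, h2⟩
    · obtain ⟨z', α', β', h2', hzx', hle', hzz⟩ := h2.augment hω hy h hzx hlt
      exact ih (x.2 - z'.2).toNat (by omega) z' α' β' h2' hzx' hle' (by omega)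

/-! ### Witnesses for the diagrams and their probabilities -/

lemma mem_seg {γ : Traj d} {s t : ℤ} {b : Bond d} :
    b ∈ seg γ s t ↔ ∃ r, s ≤ r ∧ r < t ∧ bd γ r = b := by
  simp [seg, and_assoc]

lemma seg_disjoint {γ η : Traj d} {s t s' t' : ℤ}
    (h : ∀ r, s ≤ r → r < t → s' ≤ r → r < t' → bd γ r ≠ bd η r) :
    Disjoint (seg γ s t) (seg η s' t') := by
  rw [Finset.disjoint_left]
  intro b h1 h2
  obtain ⟨r, hr1, hr2, rfl⟩ := mem_seg.1 h1
  obtain ⟨r', hr1', hr2', he⟩ := mem_seg.1 h2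
  obtain rfl := (bd_eq.1 he).1
  exact h _ hr1 hr2 hr1' hr2' he.symm

lemma seg_union (γ : Traj d) {s p t : ℤ} (h1 : s ≤ p) (h2 : p ≤ t) :
    seg γ s p ∪ seg γ p t = seg γ s t := by
  unfold seg
  rw [← Finset.image_union, Finset.Ico_union_Ico_eq_Ico h1 h2]

/-- Bond sets of paths from `u` to `x`. -/
def PathW (u x : Vert d) : Set (Finset (Bond d)) :=
  {S | ∃ γ : Traj d, Thru γ u ∧ Thru γ x ∧ u.2 ≤ x.2 ∧ S = seg γ u.2 x.2}

/-- Bond sets of paths from `u` to `x` with at least one bond. -/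
def QPathW (u x : Vert d) : Set (Finset (Bond d)) :=
  {S | ∃ γ : Traj d, Thru γ u ∧ Thru γ x ∧ u.2 < x.2 ∧ S = seg γ u.2 x.2}

/-- Bond sets of paths to `x` whose first bond is `b`. -/
def BPathW (b : Bond d) (x : Vert d) : Set (Finset (Bond d)) :=
  {S | ∃ γ : Traj d, Thru γ b.1 ∧ Thru γ b.2 ∧ Thru γ x ∧ b.2.2 = b.1.2 + 1 ∧ b.2.2 ≤ x.2 ∧
    S = seg γ b.1.2 x.2}

/-- Witnesses for `{o → u} ∘ {u → v} ∘ {o → v}`. -/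
def InitW (u v : Vert d) : Set (Finset (Bond d)) :=
  disjW (PathW 0 u) (disjW (PathW u v) (PathW 0 v))

/-- Witnesses for one factor of the diagram: disjoint paths from `u` and from `b` to `u'` and `v'`
in one of the two orders, and a path from `u'` to `v'`. If `u' = v'` the two orders coincide and
only one of them is kept, which accounts for the factor `1 / 2`. -/
def StageW (u : Vert d) (b : Bond d) (u' v' : Vert d) : Set (Finset (Bond d)) :=
  {S | S ∈ disjW (QPathW u u') (disjW (PathW u' v') (BPathW b v')) ∨
    u' ≠ v' ∧ S ∈ disjW (QPathW u v') (disjW (PathW u' v') (BPathW b u'))}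

lemma prob_PathW (μ : Measure (Config d)) (u x : Vert d) :
    μ (witEv (PathW u x)) ≤ phi2 μ u x := by
  refine measure_mono ?_
  rintro ω ⟨S, ⟨γ, hu, hx, hle, rfl⟩, hω⟩
  exact conn_of_thru hle hu hx fun r h1 h2 => hω _ (mem_seg.2 ⟨r, h1, h2, rfl⟩)

section prob

variable {μ : Measure (Config d)} {q : Vert d → ℝ≥0∞}

lemma prob_bond (hB : IsBern μ (fun b : Bond d => q (b.2 - b.1))) (b : Bond d) :
    μ {ω | ω b = true} = q (b.2 - b.1) := by
  simpa using hB.2 {b} (fun _ => true)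

lemma prob_BPathW (hB : IsBern μ (fun b : Bond d => q (b.2 - b.1))) (b : Bond d)
    (x : Vert d) : μ (witEv (BPathW b x)) ≤ q (b.2 - b.1) * phi2 μ b.2 x := by
  have hsub : BPathW b x ⊆ disjW {{b}} (PathW b.2 x) := by
    rintro S ⟨γ, h1, h2, hx, hb, hle, rfl⟩
    refine ⟨_, rfl, _, ⟨γ, h2, hx, hle, rfl⟩, ?_, ?_⟩
    · rw [Finset.disjoint_singleton_left, mem_seg]
      rintro ⟨r, hr, -, he⟩
      exact bd_ne_of_time (by omega) he
    · rw [← seg_union γ (p := b.2.2) (by omega) hle]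
      congr 1
      ext b'
      rw [mem_seg, Finset.mem_singleton]
      constructor
      · rintro ⟨r, hr1, hr2, rfl⟩
        rw [← bd_of_thru hb h1 h2, show r = b.1.2 by omega]
      · rintro rfl
        exact ⟨_, le_rfl, by omega, bd_of_thru hb h1 h2⟩
  refine (measure_mono (witEv_mono hsub)).trans ((bk_two hB _ _).trans ?_)
  gcongr
  · refine le_of_eq ?_
    rw [← prob_bond hB]
    congr 1
    ext ω
    constructor
    · rintro ⟨S, rfl, h⟩
      exact h b (Finset.mem_singleton_self b)
    · intro h
      refine ⟨{b}, rfl, fun b' hb' => ?_⟩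
      rw [Finset.mem_singleton.1 hb']
      exact h
  · exact prob_PathW μ b.2 x

lemma prob_QPathW (hB : IsBern μ (fun b : Bond d => q (b.2 - b.1))) (u x : Vert d) :
    μ (witEv (QPathW u x)) ≤ qphi μ q u x := by
  have hsub : witEv (QPathW u x) ⊆ ⋃ w : Vert d, witEv (BPathW (u, w) x) := by
    rintro ω ⟨S, ⟨γ, hu, hx, hlt, rfl⟩, hω⟩
    exact Set.mem_iUnion.2 ⟨(γ (u.2 + 1), u.2 + 1), _, ⟨γ, hu, rfl, hx, rfl, hlt, rfl⟩, hω⟩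
  refine (measure_mono hsub).trans ((measure_iUnion_le _).trans ?_)
  exact ENNReal.tsum_le_tsum fun w => prob_BPathW hB (u, w) x

lemma prob_InitW (hB : IsBern μ (fun b : Bond d => q (b.2 - b.1))) (u v : Vert d) :
    μ (witEv (InitW u v)) ≤ phi2 μ 0 u * phi2 μ u v * phi2 μ 0 v := by
  rw [mul_assoc]
  refine (bk_two hB _ _).trans ?_
  gcongr
  · exact prob_PathW μ 0 u
  · refine (bk_two hB _ _).trans ?_
    gcongr
    · exact prob_PathW μ u v
    · exact prob_PathW μ 0 v

/-- The factor of the diagram before summation over the top endpoint of `b`. -/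
noncomputable def stageBound (μ : Measure (Config d)) (q : Vert d → ℝ≥0∞)
    (u : Vert d) (b : Bond d) (u' v' : Vert d) : ℝ≥0∞ :=
  qphi μ q u u' * (phi2 μ u' v' * (q (b.2 - b.1) * phi2 μ b.2 v')) +
    if u' = v' then 0 else
      qphi μ q u v' * (phi2 μ u' v' * (q (b.2 - b.1) * phi2 μ b.2 u'))

lemma prob_StageW (hB : IsBern μ (fun b : Bond d => q (b.2 - b.1)))
    (u : Vert d) (b : Bond d) (u' v' : Vert d) :
    μ (witEv (StageW u b u' v')) ≤ stageBound μ q u b u' v' := by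
  have key : ∀ a c, μ (witEv (disjW (QPathW u a) (disjW (PathW u' v') (BPathW b c)))) ≤
      qphi μ q u a * (phi2 μ u' v' * (q (b.2 - b.1) * phi2 μ b.2 c)) := by
    intro a c
    refine (bk_two hB _ _).trans ?_
    gcongr
    · exact prob_QPathW hB u a
    · refine (bk_two hB _ _).trans ?_
      gcongr
      · exact prob_PathW μ u' v'
      · exact prob_BPathW hB b c
  unfold stageBound
  split_ifs with h
  · rw [add_zero]
    refine le_trans (measure_mono (witEv_mono ?_)) (key u' v')
    rintro S (hS | hS)
    · exact hS
    · exact absurd h hS.1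
  · refine le_trans ?_ (add_le_add (key u' v') (key v' u'))
    refine le_trans (measure_mono ?_) (measure_union_le _ _)
    rintro ω ⟨S, hS | hS, hω⟩
    · exact Or.inl ⟨S, hS, hω⟩
    · exact Or.inr ⟨S, hS.2, hω⟩

lemma tsum_stageBound (u v u' v' : Vert d) :
    ∑' w : Vert d, stageBound μ q u (v, w) u' v' = Xi μ q u v u' v' := by
  unfold stageBound Xi
  rw [ENNReal.tsum_add, ENNReal.tsum_mul_left, ENNReal.tsum_mul_left]
  change qphi μ q u u' * (phi2 μ u' v' * qphi μ q v v') + _ = _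
  split_ifs with h
  · subst h
    rw [tsum_zero, add_zero, ← two_mul, mul_assoc 2, mul_comm 2,
      ENNReal.mul_div_cancel_right two_ne_zero ENNReal.ofNat_ne_top]
    ring
  · rw [ENNReal.tsum_mul_left, ENNReal.tsum_mul_left]
    change _ + qphi μ q u v' * (phi2 μ u' v' * qphi μ q v u') = _
    rw [div_one]
    ring

end prob

/-! ### The lace-expansion event contains the diagram -/

lemma occOn_of_seg {ω : Config d} {γ : Traj d} {s t : ℤ} (h : OccOn ω γ s t) :
    ∀ b ∈ seg γ s t, ω b = true := by
  intro b hb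
  obtain ⟨r, h1, h2, rfl⟩ := mem_seg.1 hb
  exact h r h1 h2

lemma traj_of_doubleConn {ω : Config d} (hω : Ori ω) {u x : Vert d} (h : ω ∈ DoubleConn u x) :
    u.2 ≤ x.2 ∧ ∃ α β : Traj d, Thru α u ∧ Thru α x ∧ Thru β u ∧ Thru β x ∧
      OccOn ω α u.2 x.2 ∧ OccOn ω β u.2 x.2 ∧
      ∀ t, u.2 ≤ t → t < x.2 → bd α t ≠ bd β t := by
  classical
  obtain ⟨B₁, B₂, hd, h1, h2⟩ := h
  have key : ∀ B : Set (Bond d), OccursOn (connEvent u x) B ω → u.2 ≤ x.2 ∧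
      ∃ γ : Traj d, Thru γ u ∧ Thru γ x ∧
        ∀ r, u.2 ≤ r → r < x.2 → bd γ r ∈ B ∧ ω (bd γ r) = true := by
    intro B hB
    have hc : Conn (fun b => if b ∈ B then ω b else false) u x :=
      hB _ fun b hb => if_pos hb
    have hocc : ∀ b, (if b ∈ B then ω b else false) = true → b ∈ B ∧ ω b = true := by
      intro b hb
      split_ifs at hb with h
      exact ⟨h, hb⟩
    obtain ⟨hle, γ, hu, hx, hγ⟩ := traj_of_conn (fun b hb => hω b (hocc b hb).2) hc
    exact ⟨hle, γ, hu, hx, fun r hr1 hr2 => hocc _ (hγ r hr1 hr2)⟩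
  obtain ⟨hle, α, hαu, hαx, hα⟩ := key B₁ h1
  obtain ⟨-, β, hβu, hβx, hβ⟩ := key B₂ h2
  refine ⟨hle, α, β, hαu, hαx, hβu, hβx, fun r h1 h2 => (hα r h1 h2).2,
    fun r h1 h2 => (hβ r h1 h2).2, fun t h1 h2 he => ?_⟩
  exact Set.disjoint_left.1 hd (hα t h1 h2).1 (he ▸ (hβ t h1 h2).1)

/-- The last contact, before time `T`, of `β` with the two trajectories `α` and `α'`. -/
lemma last_contact (α α' β : Traj d) {s T : ℤ} (hs : s ≤ T) (h : β s = α s) :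
    ∃ p, s ≤ p ∧ p ≤ T ∧ (β p = α p ∨ β p = α' p) ∧
      ∀ t, p < t → t ≤ T → β t ≠ α t ∧ β t ≠ α' t := by
  obtain ⟨p, ⟨h1, h2, h3⟩, hmax⟩ := Int.exists_greatest_of_bdd
    (P := fun t => s ≤ t ∧ t ≤ T ∧ (β t = α t ∨ β t = α' t)) ⟨T, fun t h => h.2.1⟩
    ⟨s, le_rfl, hs, Or.inl h⟩
  refine ⟨p, h1, h2, h3, fun t ht1 ht2 => ⟨fun he => ?_, fun he => ?_⟩⟩
  · have := hmax t ⟨by omega, ht2, Or.inl he⟩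
    omega
  · have := hmax t ⟨by omega, ht2, Or.inr he⟩
    omega

lemma mem_InitW {α β : Traj d} {u v : Vert d} (hα0 : Thru α 0) (hαv : Thru α v)
    (hβ0 : Thru β 0) (hβv : Thru β v) (hu0 : 0 ≤ u.2) (huv : u.2 ≤ v.2) (hβu : Thru β u)
    (hd : ∀ t, 0 ≤ t → t < v.2 → bd α t ≠ bd β t) :
    seg α 0 v.2 ∪ seg β 0 v.2 ∈ InitW u v := by
  refine ⟨seg β 0 u.2, ⟨β, hβ0, hβu, hu0, rfl⟩, seg β u.2 v.2 ∪ seg α 0 v.2,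
    ⟨_, ⟨β, hβu, hβv, huv, rfl⟩, _, ⟨α, hα0, hαv, hu0.trans huv, rfl⟩, ?_, rfl⟩, ?_, ?_⟩
  · exact seg_disjoint fun r h1 h2 h3 h4 => (hd r h3 h4).symm
  · rw [Finset.disjoint_union_right]
    exact ⟨seg_disjoint fun r h1 h2 h3 h4 => by omega,
      seg_disjoint fun r h1 h2 h3 h4 => (hd r h3 h4).symm⟩
  · rw [← Finset.union_assoc, seg_union β hu0 huv, Finset.union_comm]

lemma mem_StageW {ω : Config d} {b : Bond d} {y v' u u' : Vert d} {α β : Traj d}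
    (hb : b.2.2 = b.1.2 + 1) (h : TwoPaths ω b y v' α β) (hu : Thru β u) (hu' : u.2 ≤ b.1.2)
    (hbu : b.2.2 ≤ u'.2) (huv : u'.2 ≤ v'.2) (hor : Thru α u' ∨ Thru β u') :
    seg α b.1.2 v'.2 ∪ seg β u.2 v'.2 ∈ StageW u b u' v' := by
  obtain ⟨hbv, hα1, hα2, hαv, hβy, hβv, -, -, hd⟩ := h
  by_cases hβu : Thru β u'
  · refine Or.inl ⟨seg β u.2 u'.2, ⟨β, hu, hβu, by omega, rfl⟩,
      seg β u'.2 v'.2 ∪ seg α b.1.2 v'.2,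
      ⟨_, ⟨β, hβu, hβv, huv, rfl⟩, _, ⟨α, hα1, hα2, hαv, hb, hbv, rfl⟩, ?_, rfl⟩, ?_, ?_⟩
    · exact seg_disjoint fun r h1 h2 h3 h4 => (hd r h3 h4).symm
    · rw [Finset.disjoint_union_right]
      exact ⟨seg_disjoint fun r h1 h2 h3 h4 => by omega,
        seg_disjoint fun r h1 h2 h3 h4 => (hd r h3 h4).symm⟩
    · rw [← Finset.union_assoc, seg_union β (by omega) huv, Finset.union_comm]
  · have hαu : Thru α u' := hor.resolve_right hβu
    have hne : u' ≠ v' := fun h => hβu (h ▸ hβv)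
    refine Or.inr ⟨hne, seg β u.2 v'.2, ⟨β, hu, hβv, by omega, rfl⟩,
      seg α u'.2 v'.2 ∪ seg α b.1.2 u'.2,
      ⟨_, ⟨α, hαu, hαv, huv, rfl⟩, _, ⟨α, hα1, hα2, hαu, hb, hbu, rfl⟩, ?_, rfl⟩, ?_, ?_⟩
    · exact seg_disjoint fun r h1 h2 h3 h4 => by omega
    · rw [Finset.disjoint_union_right]
      exact ⟨seg_disjoint fun r h1 h2 h3 h4 => (hd r (by omega) h4).symm,
        seg_disjoint fun r h1 h2 h3 h4 => (hd r h3 (by omega)).symm⟩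
    · rw [Finset.union_comm (seg α u'.2 v'.2), seg_union α (by omega) huv, Finset.union_comm]

/-- The starting points `b̄_{i-1}` of the clusters in the lace-expansion event, with `b̄₀ = o`
(the bonds are indexed from `0`). -/
def startPt (b : ℕ → Bond d) : ℕ → Vert d
  | 0 => 0
  | i + 1 => (b i).2

/-- The two trajectories at level `i`: `γ` at level `0`, and `δ i` at level `i + 1`. -/
def level (γ : Traj d) (δ : ℕ → Traj d) : ℕ → Traj d
  | 0 => γ
  | i + 1 => δ i

/-- On the lace-expansion event all lines of one of the diagrams occur bond-disjointly. At level
`i + 1` there are two disjoint paths ending at `X (i + 1)`; the vertex `U i` is the last contact of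
the second of them with the two paths of level `i`. -/
lemma exists_diagram {ω : Config d} (hω : Ori ω) (N : ℕ) (b : ℕ → Bond d) (X : ℕ → Vert d)
    (hX : ∀ i < N, (b i).1 = X i) (h0 : ω ∈ DoubleConn 0 (X 0))
    (hE : ∀ i < N, ω ∈ Eevent (b i) (X (i + 1)) (startPt b i)) :
    ∃ U : ℕ → Vert d, U N = X N ∧ ∃ T : ℕ → Finset (Bond d), T 0 ∈ InitW (U 0) (X 0) ∧
      (∀ i < N, T (i + 1) ∈ StageW (U i) (b i) (U (i + 1)) (X (i + 1))) ∧
      (∀ i j, i < j → j ≤ N → Disjoint (T i) (T j)) ∧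
      ∀ i ≤ N, ∀ e ∈ T i, ω e = true := by
  have hbt : ∀ i < N, (b i).2.2 = (X i).2 + 1 := fun i hi => by
    rw [← hX i hi]
    exact hω _ (hE i hi).1
  have hbX : ∀ i < N, (b i).2.2 ≤ (X (i + 1)).2 := fun i hi =>
    (traj_of_conn hω (hE i hi).2.1).1
  obtain ⟨hX0, γ₁, γ₂, hγ₁0, hγ₁X, hγ₂0, hγ₂X, hγ₁, hγ₂, hγd⟩ := traj_of_doubleConn hω h0
  have hY : ∀ i ≤ N, (startPt b i).2 ≤ (X i).2 := by
    rintro (_ | i) hi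
    · exact hX0
    · exact hbX i hi
  have hmono : ∀ i j, i ≤ j → j ≤ N → (X i).2 ≤ (X j).2 := by
    intro i j hij
    induction j, hij using Nat.le_induction with
    | base => exact fun _ => le_rfl
    | succ j _ ih =>
      intro hj
      have h1 := ih (by omega)
      have h2 := hbt j (by omega)
      have h3 := hbX j (by omega)
      omega
  have htwo : ∀ i, ∃ α β, i < N → TwoPaths ω (b i) (startPt b i) (X (i + 1)) α β := by
    intro i
    by_cases hi : i < N
    · obtain ⟨α, β, h⟩ := twoPaths_of_Eevent hω (by rw [hX i hi]; exact hY i hi.le) (hE i hi)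
      exact ⟨α, β, fun _ => h⟩
    · exact ⟨γ₁, γ₁, fun h => absurd h hi⟩
  choose α β hαβ using htwo
  let A := level γ₁ α
  let C := level γ₂ β
  have hAX : ∀ i ≤ N, Thru (A i) (X i) := by
    rintro (_ | i) hi
    · exact hγ₁X
    · exact (hαβ i hi).2.2.2.1
  have hAY : ∀ i ≤ N, Thru (A i) (startPt b i) := by
    rintro (_ | i) hi
    · exact hγ₁0
    · exact (hαβ i hi).2.2.1
  have hU : ∀ i, ∃ u : Vert d, (i ≤ N → (startPt b i).2 ≤ u.2 ∧ u.2 ≤ (X i).2 ∧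
      (Thru (A i) u ∨ Thru (C i) u)) ∧ (i < N → Thru (C (i + 1)) u ∧
        ∀ t, u.2 < t → t ≤ (X i).2 → C (i + 1) t ≠ A i t ∧ C (i + 1) t ≠ C i t) ∧
      (i = N → u = X N) := by
    intro i
    by_cases hi : i < N
    · have hst : C (i + 1) (startPt b i).2 = A i (startPt b i).2 := by
        rw [hAY i hi.le]
        exact (hαβ i hi).2.2.2.2.1
      obtain ⟨p, h1, h2, h3, h4⟩ := last_contact (A i) (C i) (C (i + 1)) (hY i hi.le) hst
      exact ⟨(C (i + 1) p, p), fun _ => ⟨h1, h2, h3.imp Eq.symm Eq.symm⟩,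
        fun _ => ⟨rfl, h4⟩, fun h => absurd h hi.ne⟩
    · refine ⟨X N, fun h => ?_, fun h => absurd h hi, fun _ => rfl⟩
      obtain rfl : i = N := by omega
      exact ⟨hY i le_rfl, le_rfl, Or.inl (hAX i le_rfl)⟩
  choose U hU1 hU2 hU3 using hU
  let T : ℕ → Finset (Bond d)
    | 0 => seg γ₁ 0 (X 0).2 ∪ seg γ₂ 0 (X 0).2
    | i + 1 => seg (α i) (b i).1.2 (X (i + 1)).2 ∪ seg (β i) (U i).2 (X (i + 1)).2
  refine ⟨U, hU3 N rfl, T, ?_, ?_, ?_, ?_⟩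
  · obtain ⟨h1, h2, h3 | h3⟩ := hU1 0 (Nat.zero_le _)
    · change seg γ₁ 0 (X 0).2 ∪ seg γ₂ 0 (X 0).2 ∈ _
      rw [Finset.union_comm]
      exact mem_InitW hγ₂0 hγ₂X hγ₁0 hγ₁X h1 h2 h3 fun t h1 h2 => (hγd t h1 h2).symm
    · exact mem_InitW hγ₁0 hγ₁X hγ₂0 hγ₂X h1 h2 h3 hγd
  · intro i hi
    obtain ⟨h1, h2, h3⟩ := hU1 (i + 1) hi
    refine mem_StageW (by rw [hX i hi]; exact hbt i hi) (hαβ i hi) (hU2 i hi).1 ?_ h1 h2 h3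
    rw [hX i hi]
    exact (hU1 i hi.le).2.1
  · intro i j hij hj
    obtain ⟨j, rfl⟩ : ∃ k, j = k + 1 := ⟨j - 1, by omega⟩
    -- bonds of level `i` lie on the trajectories `A i`, `C i`, before the time of `X i`
    have hTi : ∀ e ∈ T i, ∃ r < (X i).2, e = bd (A i) r ∨ e = bd (C i) r := by
      rcases i with _ | i <;> intro e he <;> rcases Finset.mem_union.1 he with he | he <;>
        obtain ⟨r, h1, h2, rfl⟩ := mem_seg.1 he
      · exact ⟨r, h2, Or.inl rfl⟩
      · exact ⟨r, h2, Or.inr rfl⟩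
      · exact ⟨r, h2, Or.inl rfl⟩
      · exact ⟨r, h2, Or.inr rfl⟩
    have hXij := hmono i j (by omega) (by omega)
    rw [Finset.disjoint_left]
    intro e he he'
    obtain ⟨r, hr, her⟩ := hTi e he
    have het : e.1.2 = r := by rcases her with rfl | rfl <;> rfl
    rcases Finset.mem_union.1 he' with he' | he' <;>
      obtain ⟨r', hr1, hr2, her'⟩ := mem_seg.1 he'
    · have : e.1.2 = r' := by rw [← her']; rfl
      rw [hX j (by omega)] at hr1
      omega
    · obtain rfl : r = r' := by rw [← het, ← her']; rfl
      rcases Nat.lt_succ_iff_lt_or_eq.1 hij with hij | rfl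
      · -- the second path of level `j + 1` starts after the time of `X i`
        obtain ⟨j, rfl⟩ : ∃ k, j = k + 1 := ⟨j - 1, by omega⟩
        have h1 : (b j).2.2 ≤ (U (j + 1)).2 := (hU1 (j + 1) (by omega)).1
        have h2 := hbt j (by omega)
        have h3 := hmono i j (by omega) (by omega)
        omega
      · have := (hU2 i (by omega)).2 (r + 1) (by omega) (by omega)
        rcases her with rfl | rfl
        · exact this.1 (bd_eq.1 her').2.2
        · exact this.2 (bd_eq.1 her').2.2
  · rintro (_ | i) hi e he <;> rcases Finset.mem_union.1 he with he | he
    · exact occOn_of_seg hγ₁ e he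
    · exact occOn_of_seg hγ₂ e he
    · exact occOn_of_seg (hαβ i hi).2.2.2.2.2.2.1 e he
    · exact occOn_of_seg ((hαβ i hi).2.2.2.2.2.2.2.1.mono (hU1 i (by omega)).1 le_rfl) e he

/-! ### Summation -/

lemma ae_ori {μ : Measure (Config d)} {q : Vert d → ℝ≥0∞}
    (hB : IsBern μ (fun b : Bond d => q (b.2 - b.1)))
    (hq : ∀ u v : Vert d, v.2 ≠ u.2 + 1 → q (v - u) = 0) : ∀ᵐ ω ∂μ, Ori ω := by
  unfold Ori
  rw [ae_all_iff]
  intro b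
  by_cases hb : b.2.2 = b.1.2 + 1
  · exact ae_of_all _ fun _ _ => hb
  · have h0 : μ {ω | ω b = true} = 0 := by rw [prob_bond hB, hq _ _ hb]
    filter_upwards [measure_eq_zero_iff_ae_notMem.1 h0] with ω hω h
    exact absurd h hω

lemma snoc_eq_of_nat {α : Type*} {N : ℕ} (f : Fin N → α) (x : α) (F : ℕ → α)
    (hf : ∀ i : Fin N, F i = f i) (hx : F N = x) (j : Fin (N + 1)) :
    (Fin.snoc f x : Fin (N + 1) → α) j = F j := by
  induction j using Fin.lastCases with
  | last => rw [Fin.snoc_last, ← hx, Fin.val_last]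
  | cast i => rw [Fin.snoc_castSucc, ← hf i, Fin.val_castSucc]

/-- Sum over families of a product is the product of the sums. -/
lemma tsum_fin_prod {α : Type*} : ∀ (n : ℕ) (f : Fin n → α → ℝ≥0∞),
    ∑' w : Fin n → α, ∏ i, f i (w i) = ∏ i, ∑' a, f i a
  | 0, f => by simp
  | n + 1, f => by
    rw [← (Fin.consEquiv fun _ => α).tsum_eq, ENNReal.tsum_prod', Fin.prod_univ_succ,
      ← tsum_fin_prod n, ← ENNReal.tsum_mul_right]
    refine tsum_congr fun a => ?_
    rw [← ENNReal.tsum_mul_left]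
    refine tsum_congr fun w => ?_
    simp [Fin.prod_univ_succ, Fin.consEquiv]

/-- Witnesses for the whole diagram with contact vertices `u` and bonds `bb`. -/
def diagW {N : ℕ} (hN : 0 < N) (x : Vert d) (bb : Fin N → Bond d) (u : Fin N → Vert d) :
    Fin (N + 1) → Set (Finset (Bond d)) :=
  Fin.cons (InitW (u ⟨0, hN⟩) (bb ⟨0, hN⟩).1) fun i =>
    StageW (u i) (bb i) ((Fin.snoc u x : Fin (N + 1) → Vert d) i.succ)
      ((Fin.snoc (fun i => (bb i).1) x : Fin (N + 1) → Vert d) i.succ)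

/-- The lace-expansion event is covered, over the contact vertices `u`, by the disjoint
occurrences of the lines of the diagrams. -/
lemma laceEvent_subset {ω : Config d} (hω : Ori ω) {N : ℕ} (hN : 0 < N) (x : Vert d)
    (bb : Fin N → Bond d) (h : ω ∈ laceEvent N bb x) :
    ∃ u : Fin N → Vert d, ω ∈ witEv {S | ∃ T : Fin (N + 1) → Finset (Bond d),
      (∀ i ∈ Finset.univ, T i ∈ diagW hN x bb u i) ∧
      (∀ i ∈ Finset.univ, ∀ j ∈ Finset.univ, i ≠ j → Disjoint (T i) (T j)) ∧
      S = Finset.univ.biUnion T} := by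
  obtain ⟨h0, hE⟩ := h
  let b : ℕ → Bond d := fun i => if h : i < N then bb ⟨i, h⟩ else (0, 0)
  let X : ℕ → Vert d := fun i => if h : i < N then (bb ⟨i, h⟩).1 else x
  have hb : ∀ i (hi : i < N), b i = bb ⟨i, hi⟩ := fun i hi => dif_pos hi
  have hX : ∀ i (hi : i < N), X i = (bb ⟨i, hi⟩).1 := fun i hi => dif_pos hi
  have hXN : X N = x := dif_neg (lt_irrefl N)
  obtain ⟨U, hUN, T, hT0, hT, hd, hocc⟩ := exists_diagram hω N b X
    (fun i hi => by rw [hb i hi, hX i hi]) (by rw [hX 0 hN]; exact h0 hN) (fun i hi => by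
      have := hE ⟨i, hi⟩
      rw [hb i hi]
      convert this using 1
      rcases i with _ | i
      · simp [startPt, X]
      · simp [startPt, X, hb i (by omega)])
  have hsU : ∀ i : Fin (N + 1), (Fin.snoc (fun i : Fin N => U i) x : Fin (N + 1) → Vert d) i = U i :=
    snoc_eq_of_nat _ _ U (fun _ => rfl) (hUN.trans hXN)
  have hsX : ∀ i : Fin (N + 1),
      (Fin.snoc (fun i => (bb i).1) x : Fin (N + 1) → Vert d) i = X i :=
    snoc_eq_of_nat _ _ X (fun i => hX i i.2) hXN
  refine ⟨fun i => U i, _, ⟨fun i => T i, ?_, ?_, rfl⟩, ?_⟩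
  · intro i _
    refine Fin.cases ?_ (fun i => ?_) i
    · change T 0 ∈ InitW (U 0) _
      rw [← hX 0 hN]
      exact hT0
    · change T (i + 1) ∈ StageW (U i) (bb i) _ _
      rw [hsU, hsX, Fin.val_succ, ← hb i i.2]
      exact hT i i.2
  · intro i _ j _ hij
    rcases lt_or_gt_of_ne hij with hlt | hlt
    · exact hd i j hlt (by omega)
    · exact (hd j i hlt (by omega)).symm
  · intro e he
    obtain ⟨i, -, hi⟩ := Finset.mem_biUnion.1 he
    exact hocc i (by omega) e hi

lemma prob_laceEvent {μ : Measure (Config d)} [IsProbabilityMeasure μ] {q : Vert d → ℝ≥0∞}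
    (hB : IsBern μ (fun b : Bond d => q (b.2 - b.1)))
    (hq : ∀ u v : Vert d, v.2 ≠ u.2 + 1 → q (v - u) = 0) {N : ℕ} (hN : 0 < N) (x : Vert d)
    (bb : Fin N → Bond d) :
    μ (laceEvent N bb x) ≤ ∑' u : Fin N → Vert d,
      phi2 μ 0 (u ⟨0, hN⟩) * phi2 μ (u ⟨0, hN⟩) (bb ⟨0, hN⟩).1 * phi2 μ 0 (bb ⟨0, hN⟩).1 *
        ∏ i : Fin N, stageBound μ q (u i) (bb i)
          ((Fin.snoc u x : Fin (N + 1) → Vert d) i.succ)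
          ((Fin.snoc (fun i => (bb i).1) x : Fin (N + 1) → Vert d) i.succ) := by
  have hsub : μ (laceEvent N bb x) ≤ μ (⋃ u : Fin N → Vert d,
      witEv {S | ∃ T : Fin (N + 1) → Finset (Bond d),
        (∀ i ∈ Finset.univ, T i ∈ diagW hN x bb u i) ∧
        (∀ i ∈ Finset.univ, ∀ j ∈ Finset.univ, i ≠ j → Disjoint (T i) (T j)) ∧
        S = Finset.univ.biUnion T}) := by
    refine measure_mono_ae ?_
    filter_upwards [ae_ori hB hq] with ω hω h
    exact Set.mem_iUnion.2 (laceEvent_subset hω hN x bb h)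
  refine hsub.trans ((measure_iUnion_le _).trans (ENNReal.tsum_le_tsum fun u => ?_))
  refine (bk_family hB (diagW hN x bb u) Finset.univ).trans ?_
  rw [Fin.prod_univ_succ]
  refine mul_le_mul' (prob_InitW hB _ _) (Finset.prod_le_prod' fun i _ => ?_)
  exact prob_StageW hB _ _ _ _

/-- The bound (piN-BKappl): for `N ≥ 1`,
`π_p^{(N)}(x) ≤ Σ φ_p(u₁) φ_p(u₁;v₁) φ_p(v₁) ∏_{i=1}^N Ξ_p(u_i,v_i;u_{i+1},v_{i+1})`
with `u_{N+1} = v_{N+1} = x`. -/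
theorem stmt14 {d : ℕ} (μ : Measure (Config d)) (q : Vert d → ℝ≥0∞)
    (hμ : IsBernoulliField μ (fun u v => q (v - u)))
    (N : ℕ) (hN : 0 < N) (x : Vert d) :
    piCoef μ N x ≤
      ∑' p : (Fin N → Vert d) × (Fin N → Vert d),
        phi2 μ 0 (p.1 ⟨0, hN⟩) * phi2 μ (p.1 ⟨0, hN⟩) (p.2 ⟨0, hN⟩) *
          phi2 μ 0 (p.2 ⟨0, hN⟩) *
          ∏ i : Fin N,
            Xi μ q (p.1 i) (p.2 i) ((Fin.snoc p.1 x : Fin (N + 1) → Vert d) i.succ)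
              ((Fin.snoc p.2 x : Fin (N + 1) → Vert d) i.succ) := by
  obtain ⟨hprob, hle, hori, hcyl⟩ := hμ
  have hB : IsBern μ (fun b : Bond d => q (b.2 - b.1)) := ⟨fun b => hle b.1 b.2, hcyl⟩
  have hpi : piCoef μ N x = ∑' bb : Fin N → Bond d, μ (laceEvent N bb x) := by
    obtain ⟨M, rfl⟩ : ∃ M, N = M + 1 := ⟨N - 1, by omega⟩
    rfl
  rw [hpi]
  refine (ENNReal.tsum_le_tsum fun bb => prob_laceEvent hB hori hN x bb).trans (le_of_eq ?_)
  -- a family of bonds is a family of bottom endpoints `v` together with one of top endpoints `w`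
  rw [ENNReal.tsum_comm, ENNReal.tsum_prod']
  refine tsum_congr fun u => ?_
  rw [← (Equiv.arrowProdEquivProdArrow (Fin N) (fun _ => Vert d) (fun _ => Vert d)).symm.tsum_eq,
    ENNReal.tsum_prod']
  refine tsum_congr fun v => ?_
  simp only [Equiv.arrowProdEquivProdArrow, Equiv.coe_fn_symm_mk]
  rw [ENNReal.tsum_mul_left, tsum_fin_prod N (fun i w => stageBound μ q (u i) (v i, w)
    ((Fin.snoc u x : Fin (N + 1) → Vert d) i.succ)
    ((Fin.snoc v x : Fin (N + 1) → Vert d) i.succ))]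
  simp only [tsum_stageBound]
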